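/- arXiv:2205.06793 — 7 statements merged into one kernel-verified Lean document; each statement's English description precedes it below -/
import Mathlib

section
/- Suppose Fr < Fk and Ir ≤ λ·Fr. For any real numbers β1 ≥ 0 and β2 with 0 ≤ β2 ≤ α that satisfy the flow constraint λ·Fr·α ≤ λ·Fr·β1 + Ir·β2, the read conversion bandwidth satisfies γ_R = λ·Fk·β1 + Ir·β2 ≥ λ·Fk·α − Ir·α·(Fk/Fr − 1). -/
theorem mul_sub_sub_one_mul_le_mul_add {R : Type*} [Ring R] [PartialOrder R] [IsOrderedRing R]
    {t x y z w : R} (ht : 1 ≤ t) (hx : x ≤ y + z) (hz : z ≤ w) :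
    t * x - (t - 1) * w ≤ t * y + z := by
  calc
    t * x - (t - 1) * w ≤ t * (y + z) - (t - 1) * z :=
      sub_le_sub (mul_le_mul_of_nonneg_left hx (zero_le_one.trans ht))
        (mul_le_mul_of_nonneg_left hz (sub_nonneg.mpr ht))
    _ = t * y + z := by noncomm_ring

-- Scaling the flow constraint by `Fk / Fr ≥ 1` turns `lam * Fr` into `lam * Fk`, but counts the
-- retired download `Ir * β2` in excess by `(Fk / Fr - 1) * (Ir * β2)`; the correction term bounds
-- that excess by its value at `β2 = α`.
theorem split_bound_loose_case1_general {K : Type*} [Field K] [LinearOrder K]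
    [IsStrictOrderedRing K] {lam Fk Fr Ir α β1 β2 : K}
    (hFr : 0 < Fr) (hFrFk : Fr ≤ Fk) (hIr : 0 ≤ Ir) (hβ2α : β2 ≤ α)
    (hflow : lam * Fr * α ≤ lam * Fr * β1 + Ir * β2) :
    lam * Fk * α - Ir * α * (Fk / Fr - 1) ≤ lam * Fk * β1 + Ir * β2 := by
  have hratio : 1 ≤ Fk / Fr := (one_le_div hFr).mpr hFrFk
  have hretired : Ir * β2 ≤ Ir * α := mul_le_mul_of_nonneg_left hβ2α hIr
  have hscale (b : K) : Fk / Fr * (lam * Fr * b) = lam * Fk * b := by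
    field_simp
  calc
    lam * Fk * α - Ir * α * (Fk / Fr - 1)
        = Fk / Fr * (lam * Fr * α) - (Fk / Fr - 1) * (Ir * α) := by
      rw [hscale, mul_comm (Ir * α)]
    _ ≤ Fk / Fr * (lam * Fr * β1) + Ir * β2 :=
      mul_sub_sub_one_mul_le_mul_add hratio hflow hretired
    _ = lam * Fk * β1 + Ir * β2 := by rw [hscale]

/-- Theorem 1, case `Ir ≤ λ·Fr` (with `Fr < Fk`): any feasible `(β1, β2)` with
`β1 ≥ 0`, `0 ≤ β2 ≤ α` satisfying the flow constraint `λ·Fr·α ≤ λ·Fr·β1 + Ir·β2`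
has read conversion bandwidth `γ_R = λ·Fk·β1 + Ir·β2 ≥ λ·Fk·α − Ir·α·(Fk/Fr − 1)`. -/
theorem split_bound_loose_case1 (lam Fk Fr Ir : ℕ) (hlam : 2 ≤ lam)
    (hFk : 0 < Fk) (hFr : 0 < Fr) (hIr : 0 < Ir)
    (hFrFk : Fr < Fk) (hIrlam : Ir ≤ lam * Fr)
    (α β1 β2 : ℝ) (hα : 0 < α)
    (hβ1 : 0 ≤ β1) (hβ2 : 0 ≤ β2) (hβ2α : β2 ≤ α)
    (hflow : (lam : ℝ) * Fr * α ≤ (lam : ℝ) * Fr * β1 + (Ir : ℝ) * β2) :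
    (lam : ℝ) * Fk * β1 + (Ir : ℝ) * β2
      ≥ (lam : ℝ) * Fk * α - (Ir : ℝ) * α * ((Fk : ℝ) / Fr - 1) :=
  split_bound_loose_case1_general (Nat.cast_pos.mpr hFr) (Nat.cast_le.mpr hFrFk.le)
    (Nat.cast_nonneg Ir) hβ2α hflow
end

section
/- Suppose Fr < Fk and Ir ≤ λ·Fr. Then the value λ·Fk·α − Ir·α·(Fk/Fr − 1) is the least value of the objective γ_R = λ·Fk·β1 + Ir·β2 over the feasible set {(β1, β2) : 0 ≤ β1 ≤ α, 0 ≤ β2 ≤ α, and λ·Fr·α ≤ λ·Fr·β1 + Ir·β2}, and this least value is attained at the point β1 = (1 − Ir/(λ·Fr))·α, β2 = α. -/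
/-! By linear programming duality with `c = Fk / Fr ≥ 1`, the excess of `γ_R` over the claimed
minimum is `c` times the slack in the flow constraint plus `(c - 1) * Ir` times the slack in
`β2 ≤ α`. It is nonnegative on the feasible set and vanishes where both constraints are tight. -/

section Field

variable {𝕜 : Type*} [Field 𝕜] {lam Fk Fr Ir α β1 β2 : 𝕜}

lemma readBandwidth_eq_add_slacks (hFr : Fr ≠ 0) :
    lam * Fk * β1 + Ir * β2 = lam * Fk * α - Ir * α * (Fk / Fr - 1) +
      (Fk / Fr * (lam * Fr * β1 + Ir * β2 - lam * Fr * α) +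
        (Fk / Fr - 1) * (Ir * (α - β2))) := by
  field_simp
  ring

lemma flow_eq_at_optimum (hlam : lam ≠ 0) (hFr : Fr ≠ 0) :
    lam * Fr * ((1 - Ir / (lam * Fr)) * α) + Ir * α = lam * Fr * α := by
  field_simp
  ring

lemma readBandwidth_eq_at_optimum (hlam : lam ≠ 0) (hFr : Fr ≠ 0) :
    lam * Fk * ((1 - Ir / (lam * Fr)) * α) + Ir * α =
      lam * Fk * α - Ir * α * (Fk / Fr - 1) := by
  rw [readBandwidth_eq_add_slacks (α := α) hFr, flow_eq_at_optimum hlam hFr]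
  simp only [sub_self, mul_zero, add_zero]

variable [LinearOrder 𝕜] [IsStrictOrderedRing 𝕜]

lemma le_readBandwidth_of_flow_le (hFr : 0 < Fr) (hFrFk : Fr ≤ Fk) (hIr : 0 ≤ Ir)
    (hβ2 : β2 ≤ α) (hflow : lam * Fr * α ≤ lam * Fr * β1 + Ir * β2) :
    lam * Fk * α - Ir * α * (Fk / Fr - 1) ≤ lam * Fk * β1 + Ir * β2 := by
  have hratio : 1 ≤ Fk / Fr := (one_le_div hFr).2 hFrFk
  have hflow_slack : 0 ≤ Fk / Fr * (lam * Fr * β1 + Ir * β2 - lam * Fr * α) :=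
    mul_nonneg (zero_le_one.trans hratio) (sub_nonneg.2 hflow)
  have hretired_slack : 0 ≤ (Fk / Fr - 1) * (Ir * (α - β2)) :=
    mul_nonneg (sub_nonneg.2 hratio) (mul_nonneg hIr (sub_nonneg.2 hβ2))
  rw [readBandwidth_eq_add_slacks (α := α) hFr.ne']
  exact le_add_of_nonneg_right (add_nonneg hflow_slack hretired_slack)

lemma one_sub_div_mul_mem_Icc {a b x : 𝕜} (ha : 0 ≤ a) (hab : a ≤ b) (hx : 0 ≤ x) :
    (1 - a / b) * x ∈ Set.Icc 0 x :=
  have hb : 0 ≤ b := ha.trans hab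
  ⟨mul_nonneg (sub_nonneg.2 (div_le_one_of_le₀ hab hb)) hx,
    mul_le_of_le_one_left hx (sub_le_self 1 (div_nonneg ha hb))⟩

theorem beta_loose_case1_general (hlam : 0 < lam) (hFr : 0 < Fr) (hFrFk : Fr ≤ Fk)
    (hIr : 0 ≤ Ir) (hIrlam : Ir ≤ lam * Fr) (hα : 0 ≤ α) :
    IsLeast {g : 𝕜 | ∃ β1 β2 : 𝕜, 0 ≤ β1 ∧ β1 ≤ α ∧ 0 ≤ β2 ∧ β2 ≤ α ∧
        lam * Fr * α ≤ lam * Fr * β1 + Ir * β2 ∧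
        g = lam * Fk * β1 + Ir * β2}
      (lam * Fk * α - Ir * α * (Fk / Fr - 1)) ∧
    lam * Fk * ((1 - Ir / (lam * Fr)) * α) + Ir * α
      = lam * Fk * α - Ir * α * (Fk / Fr - 1) := by
  have hvalue := readBandwidth_eq_at_optimum (Fk := Fk) (Ir := Ir) (α := α) hlam.ne' hFr.ne'
  obtain ⟨hβ1_nonneg, hβ1_le⟩ := one_sub_div_mul_mem_Icc hIr hIrlam hα
  refine ⟨⟨⟨_, α, hβ1_nonneg, hβ1_le, hα, le_rfl, ?_, hvalue.symm⟩, ?_⟩, hvalue⟩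
  · exact (flow_eq_at_optimum hlam.ne' hFr.ne').ge
  · rintro _ ⟨β1, β2, -, -, -, hβ2, hflow, rfl⟩
    exact le_readBandwidth_of_flow_le hFr hFrFk hIr hβ2 hflow

end Field

/-- Lemma 2, case `Ir ≤ λ·Fr` (with `Fr < Fk`): the value
`λ·Fk·α − Ir·α·(Fk/Fr − 1)` is the least value of `γ_R = λ·Fk·β1 + Ir·β2`
over the feasible set `{(β1, β2) : 0 ≤ β1 ≤ α, 0 ≤ β2 ≤ α,
λ·Fr·α ≤ λ·Fr·β1 + Ir·β2}`, attained at `β1 = (1 − Ir/(λ·Fr))·α`, `β2 = α`. -/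
theorem beta_loose_case1 (lam Fk Fr Ir : ℕ) (hlam : 2 ≤ lam)
    (hFk : 0 < Fk) (hFr : 0 < Fr) (hIr : 0 < Ir)
    (hFrFk : Fr < Fk) (hIrlam : Ir ≤ lam * Fr)
    (α : ℝ) (hα : 0 < α) :
    IsLeast {g : ℝ | ∃ β1 β2 : ℝ, 0 ≤ β1 ∧ β1 ≤ α ∧ 0 ≤ β2 ∧ β2 ≤ α ∧
        (lam : ℝ) * Fr * α ≤ (lam : ℝ) * Fr * β1 + (Ir : ℝ) * β2 ∧
        g = (lam : ℝ) * Fk * β1 + (Ir : ℝ) * β2}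
      ((lam : ℝ) * Fk * α - (Ir : ℝ) * α * ((Fk : ℝ) / Fr - 1)) ∧
    (lam : ℝ) * Fk * ((1 - (Ir : ℝ) / ((lam : ℝ) * Fr)) * α) + (Ir : ℝ) * α
      = (lam : ℝ) * Fk * α - (Ir : ℝ) * α * ((Fk : ℝ) / Fr - 1) :=
  beta_loose_case1_general (mod_cast two_pos.trans_le hlam) (mod_cast hFr)
    (mod_cast hFrFk.le) Ir.cast_nonneg (mod_cast hIrlam) hα.le
end

section
/- Suppose Fr < Fk and Ir ≥ λ·Fr. Then the value λ·Fr·α is the least value of the objective γ_R = λ·Fk·β1 + Ir·β2 over the feasible set {(β1, β2) : 0 ≤ β1 ≤ α, 0 ≤ β2 ≤ α, and λ·Fr·α ≤ λ·Fr·β1 + Ir·β2}, and this least value is attained at the point β1 = 0, β2 = (λ·Fr/Ir)·α. -/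
/-!
A unit of `β2` costs exactly as much read bandwidth as it adds to the flow (both have coefficient
`Ir`), while a unit of `β1` costs `λ·Fk` and adds only `λ·Fr ≤ λ·Fk`. Hence `γ_R` dominates the
flow, and so the required amount, with equality when the whole flow comes from the retired
symbols; `Ir ≥ λ·Fr` says that these have the capacity for it.
-/

section LinearProgram

theorem le_mul_add_of_le_mul_add {R : Type*} [Semiring R] [PartialOrder R] [IsOrderedRing R]
    {a a' c x z : R} (ha : a ≤ a') (hx : 0 ≤ x) (h : c ≤ a * x + z) : c ≤ a' * x + z :=
  h.trans (by gcongr)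

variable {K : Type*} [Field K] [LinearOrder K] [IsStrictOrderedRing K] {a a' b c α : K}

theorem div_mem_Icc_zero (hb : 0 < b) (hc : 0 ≤ c) (hcap : c ≤ b * α) :
    c / b ∈ Set.Icc 0 α :=
  ⟨div_nonneg hc hb.le, (div_le_iff₀' hb).2 hcap⟩

theorem beta_loose_case2_general (hcost : a ≤ a') (hb : 0 < b) (hc : 0 ≤ c)
    (hcap : c ≤ b * α) :
    IsLeast {g : K | ∃ β1 β2 : K, 0 ≤ β1 ∧ β1 ≤ α ∧ 0 ≤ β2 ∧ β2 ≤ α ∧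
        c ≤ a * β1 + b * β2 ∧ g = a' * β1 + b * β2} c ∧
    a' * 0 + b * (c / b) = c := by
  have flow_eq (t : K) : t * 0 + b * (c / b) = c := by
    rw [mul_zero, zero_add, mul_div_cancel₀ c hb.ne']
  obtain ⟨hβ_nonneg, hβ_le⟩ := div_mem_Icc_zero hb hc hcap
  refine ⟨⟨?attained, ?lower_bound⟩, flow_eq a'⟩
  case attained =>
    exact ⟨0, c / b, le_rfl, hβ_nonneg.trans hβ_le, hβ_nonneg, hβ_le,
      (flow_eq a).ge, (flow_eq a').symm⟩
  case lower_bound =>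
    rintro _ ⟨β1, β2, hβ1, -, -, -, hflow, rfl⟩
    exact le_mul_add_of_le_mul_add hcost hβ1 hflow

end LinearProgram

/-- Lemma 2, case `Ir ≥ λ·Fr` (with `Fr < Fk`): the value `λ·Fr·α` is the least
value of `γ_R = λ·Fk·β1 + Ir·β2` over the feasible set `{(β1, β2) : 0 ≤ β1 ≤ α,
0 ≤ β2 ≤ α, λ·Fr·α ≤ λ·Fr·β1 + Ir·β2}`, attained at `β1 = 0`, `β2 = (λ·Fr/Ir)·α`. -/
theorem beta_loose_case2 (lam Fk Fr Ir : ℕ) (hlam : 2 ≤ lam)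
    (hFk : 0 < Fk) (hFr : 0 < Fr) (hIr : 0 < Ir)
    (hFrFk : Fr < Fk) (hIrlam : lam * Fr ≤ Ir)
    (α : ℝ) (hα : 0 < α) :
    IsLeast {g : ℝ | ∃ β1 β2 : ℝ, 0 ≤ β1 ∧ β1 ≤ α ∧ 0 ≤ β2 ∧ β2 ≤ α ∧
        (lam : ℝ) * Fr * α ≤ (lam : ℝ) * Fr * β1 + (Ir : ℝ) * β2 ∧
        g = (lam : ℝ) * Fk * β1 + (Ir : ℝ) * β2}
      ((lam : ℝ) * Fr * α) ∧
    (lam : ℝ) * Fk * 0 + (Ir : ℝ) * ((lam : ℝ) * Fr / Ir * α)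
      = (lam : ℝ) * Fr * α := by
  rw [div_mul_eq_mul_div]
  exact beta_loose_case2_general (hcost := by gcongr) (hb := by exact_mod_cast hIr)
    (hc := by positivity) (hcap := by gcongr; exact_mod_cast hIrlam)
end

section
/- Suppose Fr ≤ Fk and Ir ≥ Fr. For any real numbers β1, β2 that satisfy both the flow constraint λ·Fr·α ≤ λ·Fr·β1 + Ir·β2 and the interference constraint λ·β1 ≥ (λ − 1)·β2, the read conversion bandwidth satisfies γ_R = λ·Fk·β1 + Ir·β2 ≥ λ·Fr·α·((λ − 1)·Fk + Ir)/((λ − 1)·Fr + Ir). -/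
/-!
With `x = λ β₁` and `m = λ - 1`, the claim is weak duality for the linear program that minimises
`Fk x + Ir y` subject to `c ≤ Fr x + Ir y` and `m y ≤ x`. Up to the common denominator
`m Fr + Ir`, the dual multipliers of the two constraints are `m Fk + Ir` and `Ir (Fk - Fr)`, and
both are nonnegative.
-/

section WeakDuality

theorem mul_add_mul_eq_dual_combination {R : Type*} [CommRing R] (m K F I x y : R) :
    (m * F + I) * (K * x + I * y) =
      (m * K + I) * (F * x + I * y) + I * (K - F) * (x - m * y) := by
  ring

variable {𝕜 : Type*} [Field 𝕜] [LinearOrder 𝕜] [IsStrictOrderedRing 𝕜]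

theorem mul_div_le_mul_add_mul_of_le_of_mul_le {m K F I c x y : 𝕜} (hm : 0 ≤ m) (hI : 0 ≤ I)
    (hFK : F ≤ K) (hden : 0 < m * F + I) (hflow : c ≤ F * x + I * y) (hinterf : m * y ≤ x) :
    c * (m * K + I) / (m * F + I) ≤ K * x + I * y := by
  have hflow_multiplier : 0 ≤ m * K + I :=
    hden.le.trans (by gcongr)
  have hinterf_multiplier : 0 ≤ I * (K - F) :=
    mul_nonneg hI (sub_nonneg.2 hFK)
  rw [div_le_iff₀' hden]
  calc
    c * (m * K + I) = (m * K + I) * c := mul_comm _ _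
    _ ≤ (m * K + I) * (F * x + I * y) := by gcongr
    _ ≤ (m * K + I) * (F * x + I * y) + I * (K - F) * (x - m * y) :=
      le_add_of_nonneg_right (mul_nonneg hinterf_multiplier (sub_nonneg.2 hinterf))
    _ = (m * F + I) * (K * x + I * y) := (mul_add_mul_eq_dual_combination m K F I x y).symm

theorem split_bound_tight_general {lam Fk Fr Ir α β1 β2 : 𝕜} (hlam : 1 ≤ lam) (hFr : 0 ≤ Fr)
    (hIr : 0 < Ir) (hFrFk : Fr ≤ Fk)
    (hflow : lam * Fr * α ≤ lam * Fr * β1 + Ir * β2)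
    (hinterf : (lam - 1) * β2 ≤ lam * β1) :
    lam * Fr * α * ((lam - 1) * Fk + Ir) / ((lam - 1) * Fr + Ir) ≤ lam * Fk * β1 + Ir * β2 := by
  have hlam_sub_one : 0 ≤ lam - 1 := sub_nonneg.2 hlam
  have hden : 0 < (lam - 1) * Fr + Ir := by positivity
  rw [mul_comm lam Fr, mul_assoc Fr lam β1] at hflow
  rw [mul_comm lam Fr, mul_comm lam Fk, mul_assoc Fk lam β1]
  exact mul_div_le_mul_add_mul_of_le_of_mul_le hlam_sub_one hIr.le hFrFk hden hflow hinterf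

end WeakDuality

/-- Theorem 2: if `Fr ≤ Fk` and `Ir ≥ Fr`, any `(β1, β2)` satisfying both the
flow constraint `λ·Fr·α ≤ λ·Fr·β1 + Ir·β2` and the interference constraint
`λ·β1 ≥ (λ − 1)·β2` has read conversion bandwidth
`γ_R = λ·Fk·β1 + Ir·β2 ≥ λ·Fr·α·((λ − 1)·Fk + Ir)/((λ − 1)·Fr + Ir)`. -/
theorem split_bound_tight (lam Fk Fr Ir : ℕ) (hlam : 2 ≤ lam)
    (hFk : 0 < Fk) (hFr : 0 < Fr) (hIr : 0 < Ir)
    (hFrFk : Fr ≤ Fk) (hIrFr : Fr ≤ Ir)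
    (α β1 β2 : ℝ) (hα : 0 < α)
    (hflow : (lam : ℝ) * Fr * α ≤ (lam : ℝ) * Fr * β1 + (Ir : ℝ) * β2)
    (hinterf : (lam : ℝ) * β1 ≥ ((lam : ℝ) - 1) * β2) :
    (lam : ℝ) * Fk * β1 + (Ir : ℝ) * β2
      ≥ (lam : ℝ) * Fr * α * (((lam : ℝ) - 1) * Fk + Ir) / (((lam : ℝ) - 1) * Fr + Ir) := by
  have hlam_real : (1 : ℝ) ≤ lam := by exact_mod_cast one_le_two.trans hlam
  exact split_bound_tight_general hlam_real Fr.cast_nonneg (Nat.cast_pos.2 hIr)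
    (Nat.cast_le.2 hFrFk) hflow hinterf
end

section
/- Suppose Fr < Fk and Ir ≥ Fr. Then the value λ·Fr·α·((λ − 1)·Fk + Ir)/((λ − 1)·Fr + Ir) is the least value of the objective γ_R = λ·Fk·β1 + Ir·β2 over the feasible set {(β1, β2) : 0 ≤ β1 ≤ α, 0 ≤ β2 ≤ α, λ·Fr·α ≤ λ·Fr·β1 + Ir·β2, and λ·β1 ≥ (λ − 1)·β2}, and this least value is attained at the point β1 = (λ − 1)·Fr·α/((λ − 1)·Fr + Ir), β2 = λ·Fr·α/((λ − 1)·Fr + Ir); moreover at this point both the flow constraint and the interference constraint hold with equality. -/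
/-!
With `D = (λ − 1)·Fr + Ir`, the identity
`D·γ_R = ((λ − 1)·Fk + Ir)·(λ·Fr·β1 + Ir·β2) + Ir·(Fk − Fr)·(λ·β1 − (λ − 1)·β2)`
is a linear programming duality certificate: it writes the objective as a combination, with
nonnegative multipliers, of the quantities bounded below by the flow and the interference
constraints. Hence `γ_R` is bounded below on the feasible set, and equality holds wherever both
constraints are tight, which determines `(β1, β2)`. This point is feasible: `β1 ≤ α` because
`(λ − 1)·Fr ≤ D`, and `β2 ≤ α` because `λ·Fr ≤ D`, that is, `Fr ≤ Ir`.
-/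

section Objective

variable {R : Type*} [CommRing R]

/-- The read conversion bandwidth `γ_R`, as a function of the pair `β = (β1, β2)`. -/
def readBandwidth (lam Fk Ir : R) (β : R × R) : R :=
  lam * Fk * β.1 + Ir * β.2

theorem mul_readBandwidth_eq_flow_add_interference (lam Fk Fr Ir : R) (β : R × R) :
    ((lam - 1) * Fr + Ir) * readBandwidth lam Fk Ir β =
      ((lam - 1) * Fk + Ir) * (lam * Fr * β.1 + Ir * β.2) +
        Ir * (Fk - Fr) * (lam * β.1 - (lam - 1) * β.2) := by
  unfold readBandwidth
  ring

end Objective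

section TightPoint

variable {K : Type*} [Field K]

/-- The pair `(β1, β2)` at which the flow and the interference constraints both hold with
equality, provided that the denominator `(λ − 1)·Fr + Ir` is nonzero. -/
def tightPoint (lam Fr Ir α : K) : K × K :=
  ((lam - 1) * Fr * α / ((lam - 1) * Fr + Ir), lam * Fr * α / ((lam - 1) * Fr + Ir))

theorem flow_tightPoint {lam Fr Ir : K} (hD : (lam - 1) * Fr + Ir ≠ 0) (α : K) :
    lam * Fr * α =
      lam * Fr * (tightPoint lam Fr Ir α).1 + Ir * (tightPoint lam Fr Ir α).2 := calc
  lam * Fr * α = lam * Fr * α * ((lam - 1) * Fr + Ir) / ((lam - 1) * Fr + Ir) :=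
    (mul_div_cancel_right₀ _ hD).symm
  _ = lam * Fr * (tightPoint lam Fr Ir α).1 + Ir * (tightPoint lam Fr Ir α).2 := by
    unfold tightPoint
    ring

theorem interference_tightPoint (lam Fr Ir α : K) :
    lam * (tightPoint lam Fr Ir α).1 = (lam - 1) * (tightPoint lam Fr Ir α).2 := by
  unfold tightPoint
  ring

theorem readBandwidth_tightPoint {lam Fr Ir : K} (hD : (lam - 1) * Fr + Ir ≠ 0) (Fk α : K) :
    readBandwidth lam Fk Ir (tightPoint lam Fr Ir α) =
      lam * Fr * α * ((lam - 1) * Fk + Ir) / ((lam - 1) * Fr + Ir) := by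
  rw [eq_div_iff hD, mul_comm, mul_readBandwidth_eq_flow_add_interference,
    ← flow_tightPoint hD, interference_tightPoint]
  ring

end TightPoint

section Minimum

variable {K : Type*} [Field K] [LinearOrder K] [IsStrictOrderedRing K] {lam Fk Fr Ir α : K}

/-- The pairs `(β1, β2)` with entries in `[0, α]` that satisfy the flow constraint and the
interference constraint. -/
def feasibleRegion (lam Fr Ir α : K) : Set (K × K) :=
  {β | 0 ≤ β.1 ∧ β.1 ≤ α ∧ 0 ≤ β.2 ∧ β.2 ≤ α ∧
    lam * Fr * α ≤ lam * Fr * β.1 + Ir * β.2 ∧ (lam - 1) * β.2 ≤ lam * β.1}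

theorem sub_one_mul_add_pos (hlam : 1 ≤ lam) (hFr : 0 ≤ Fr) (hIr : 0 < Ir) :
    0 < (lam - 1) * Fr + Ir :=
  add_pos_of_nonneg_of_pos (mul_nonneg (sub_nonneg.2 hlam) hFr) hIr

theorem tightPoint_mem_feasibleRegion (hlam : 1 ≤ lam) (hFr : 0 ≤ Fr) (hIr : 0 < Ir)
    (hFrIr : Fr ≤ Ir) (hα : 0 ≤ α) :
    tightPoint lam Fr Ir α ∈ feasibleRegion lam Fr Ir α := by
  have hD : 0 < (lam - 1) * Fr + Ir := sub_one_mul_add_pos hlam hFr hIr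
  have fst_nonneg : 0 ≤ (lam - 1) * Fr * α :=
    mul_nonneg (mul_nonneg (sub_nonneg.2 hlam) hFr) hα
  have fst_le : (lam - 1) * Fr * α ≤ α * ((lam - 1) * Fr + Ir) := by
    rw [mul_comm α]
    gcongr
    exact le_add_of_nonneg_right hIr.le
  have snd_nonneg : 0 ≤ lam * Fr * α := by positivity
  have snd_le : lam * Fr * α ≤ α * ((lam - 1) * Fr + Ir) := calc
    lam * Fr * α = α * ((lam - 1) * Fr + Fr) := by ring
    _ ≤ α * ((lam - 1) * Fr + Ir) := by gcongr
  exact ⟨div_nonneg fst_nonneg hD.le, (div_le_iff₀ hD).2 fst_le,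
    div_nonneg snd_nonneg hD.le, (div_le_iff₀ hD).2 snd_le,
    (flow_tightPoint hD.ne' α).le, (interference_tightPoint lam Fr Ir α).ge⟩

theorem le_readBandwidth_of_flow_of_interference (hlam : 1 ≤ lam) (hFr : 0 ≤ Fr)
    (hFrFk : Fr ≤ Fk) (hIr : 0 < Ir) {c : K} {β : K × K}
    (flow : c ≤ lam * Fr * β.1 + Ir * β.2) (interference : (lam - 1) * β.2 ≤ lam * β.1) :
    c * ((lam - 1) * Fk + Ir) / ((lam - 1) * Fr + Ir) ≤ readBandwidth lam Fk Ir β := by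
  have flow_multiplier : 0 ≤ (lam - 1) * Fk + Ir :=
    (sub_one_mul_add_pos hlam (hFr.trans hFrFk) hIr).le
  have interference_multiplier : 0 ≤ Ir * (Fk - Fr) := mul_nonneg hIr.le (sub_nonneg.2 hFrFk)
  rw [div_le_iff₀' (sub_one_mul_add_pos hlam hFr hIr),
    mul_readBandwidth_eq_flow_add_interference, mul_comm c]
  exact le_add_of_le_of_nonneg (mul_le_mul_of_nonneg_left flow flow_multiplier)
    (mul_nonneg interference_multiplier (sub_nonneg.2 interference))

theorem beta_tight_general (hlam : 1 ≤ lam) (hFr : 0 ≤ Fr) (hFrFk : Fr ≤ Fk) (hIr : 0 < Ir)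
    (hFrIr : Fr ≤ Ir) (hα : 0 ≤ α) :
    IsLeast (readBandwidth lam Fk Ir '' feasibleRegion lam Fr Ir α)
      (lam * Fr * α * ((lam - 1) * Fk + Ir) / ((lam - 1) * Fr + Ir)) ∧
    readBandwidth lam Fk Ir (tightPoint lam Fr Ir α) =
      lam * Fr * α * ((lam - 1) * Fk + Ir) / ((lam - 1) * Fr + Ir) ∧
    lam * Fr * α =
      lam * Fr * (tightPoint lam Fr Ir α).1 + Ir * (tightPoint lam Fr Ir α).2 ∧
    lam * (tightPoint lam Fr Ir α).1 = (lam - 1) * (tightPoint lam Fr Ir α).2 := by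
  have hD : (lam - 1) * Fr + Ir ≠ 0 := (sub_one_mul_add_pos hlam hFr hIr).ne'
  have value := readBandwidth_tightPoint hD Fk α
  refine ⟨⟨⟨_, tightPoint_mem_feasibleRegion hlam hFr hIr hFrIr hα, value⟩, ?_⟩,
    value, flow_tightPoint hD α, interference_tightPoint lam Fr Ir α⟩
  rintro _ ⟨β, ⟨-, -, -, -, flow, interference⟩, rfl⟩
  exact le_readBandwidth_of_flow_of_interference hlam hFr hFrFk hIr flow interference

end Minimum

/-- Lemma 3, case `Ir ≥ Fr` (with `Fr < Fk`): the value
`λ·Fr·α·((λ − 1)·Fk + Ir)/((λ − 1)·Fr + Ir)` is the least value of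
`γ_R = λ·Fk·β1 + Ir·β2` over the feasible set `{(β1, β2) : 0 ≤ β1 ≤ α,
0 ≤ β2 ≤ α, λ·Fr·α ≤ λ·Fr·β1 + Ir·β2, λ·β1 ≥ (λ − 1)·β2}`, attained at
`β1 = (λ − 1)·Fr·α/((λ − 1)·Fr + Ir)`, `β2 = λ·Fr·α/((λ − 1)·Fr + Ir)`;
moreover both constraints hold with equality at this point. -/
theorem beta_tight (lam Fk Fr Ir : ℕ) (hlam : 2 ≤ lam)
    (hFk : 0 < Fk) (hFr : 0 < Fr) (hIr : 0 < Ir)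
    (hFrFk : Fr < Fk) (hIrFr : Fr ≤ Ir)
    (α : ℝ) (hα : 0 < α) :
    IsLeast {g : ℝ | ∃ β1 β2 : ℝ, 0 ≤ β1 ∧ β1 ≤ α ∧ 0 ≤ β2 ∧ β2 ≤ α ∧
        (lam : ℝ) * Fr * α ≤ (lam : ℝ) * Fr * β1 + (Ir : ℝ) * β2 ∧
        (lam : ℝ) * β1 ≥ ((lam : ℝ) - 1) * β2 ∧
        g = (lam : ℝ) * Fk * β1 + (Ir : ℝ) * β2}
      ((lam : ℝ) * Fr * α * (((lam : ℝ) - 1) * Fk + Ir) / (((lam : ℝ) - 1) * Fr + Ir)) ∧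
    ((lam : ℝ) * Fk * (((lam : ℝ) - 1) * Fr * α / (((lam : ℝ) - 1) * Fr + Ir))
        + (Ir : ℝ) * ((lam : ℝ) * Fr * α / (((lam : ℝ) - 1) * Fr + Ir))
      = (lam : ℝ) * Fr * α * (((lam : ℝ) - 1) * Fk + Ir) / (((lam : ℝ) - 1) * Fr + Ir)) ∧
    ((lam : ℝ) * Fr * α
      = (lam : ℝ) * Fr * (((lam : ℝ) - 1) * Fr * α / (((lam : ℝ) - 1) * Fr + Ir))
        + (Ir : ℝ) * ((lam : ℝ) * Fr * α / (((lam : ℝ) - 1) * Fr + Ir))) ∧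
    ((lam : ℝ) * (((lam : ℝ) - 1) * Fr * α / (((lam : ℝ) - 1) * Fr + Ir))
      = ((lam : ℝ) - 1) * ((lam : ℝ) * Fr * α / (((lam : ℝ) - 1) * Fr + Ir))) := by
  simpa only [Set.image, feasibleRegion, readBandwidth, tightPoint, Set.mem_ofPred_eq, Prod.exists,
    and_assoc, ge_iff_le, eq_comm] using
    beta_tight_general (K := ℝ) (lam := lam) (Fk := Fk) (Fr := Fr) (Ir := Ir)
      (mod_cast one_le_two.trans hlam) (mod_cast hFr.le) (mod_cast hFrFk.le) (mod_cast hIr)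
      (mod_cast hIrFr) hα.le
end

section
/- Suppose Fr ≤ Fk and Ir ≥ Fr. Then the lower bound of Theorem 2 is at most the read conversion bandwidth of access-optimal convertible codes: λ·Fr·α·((λ − 1)·Fk + Ir)/((λ − 1)·Fr + Ir) ≤ ((λ − 1)·Fk + Fr)·α, with equality if and only if Ir = Fr or Fk = Fr. -/
/-!
After clearing the denominator `D = (lam - 1) * Fr + Ir`, the access-optimal bandwidth minus the
lower bound factors as `α * (lam - 1) * ((Ir - Fr) * (Fk - Fr))`. Its sign gives the inequality
and its two last factors give the cases of equality.
-/

section ReadBandwidth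

variable {K : Type*} [Field K]

/-- The read conversion bandwidth of access-optimal convertible codes in the split regime with
`Fr ≤ Ir`. As in `readBandwidthLowerBound`, the parameters of the codes are scalars of `K`, so
that `lam - 1` is not truncated. -/
def accessOptimalReadBandwidth (lam Fk Fr α : K) : K :=
  ((lam - 1) * Fk + Fr) * α

/-- The lower bound of Theorem 2 on the read conversion bandwidth. It has the junk value `0` where
`(lam - 1) * Fr + Ir = 0`. -/
def readBandwidthLowerBound (lam Fk Fr Ir α : K) : K :=
  lam * Fr * α * ((lam - 1) * Fk + Ir) / ((lam - 1) * Fr + Ir)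

theorem accessOptimalReadBandwidth_sub_readBandwidthLowerBound {lam Fr Ir : K} (Fk α : K)
    (hD : (lam - 1) * Fr + Ir ≠ 0) :
    accessOptimalReadBandwidth lam Fk Fr α - readBandwidthLowerBound lam Fk Fr Ir α =
      α * (lam - 1) * ((Ir - Fr) * (Fk - Fr)) / ((lam - 1) * Fr + Ir) := by
  rw [accessOptimalReadBandwidth, readBandwidthLowerBound, sub_div' hD]
  ring

theorem readBandwidthLowerBound_eq_accessOptimalReadBandwidth_iff {lam Fk Fr Ir α : K}
    (hlam : lam ≠ 1) (hα : α ≠ 0) (hD : (lam - 1) * Fr + Ir ≠ 0) :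
    readBandwidthLowerBound lam Fk Fr Ir α = accessOptimalReadBandwidth lam Fk Fr α ↔
      Ir = Fr ∨ Fk = Fr := by
  have hc : α * (lam - 1) ≠ 0 := mul_ne_zero hα (sub_ne_zero.mpr hlam)
  rw [eq_comm, ← sub_eq_zero, accessOptimalReadBandwidth_sub_readBandwidthLowerBound Fk α hD,
    div_eq_zero_iff, or_iff_left hD, mul_eq_zero_iff_left hc, mul_eq_zero, sub_eq_zero,
    sub_eq_zero]

variable [LinearOrder K] [IsStrictOrderedRing K]

theorem readBandwidthLowerBound_le_accessOptimalReadBandwidth {lam Fk Fr Ir α : K}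
    (hlam : 1 ≤ lam) (hα : 0 ≤ α) (hFrFk : Fr ≤ Fk) (hFrIr : Fr ≤ Ir)
    (hD : 0 < (lam - 1) * Fr + Ir) :
    readBandwidthLowerBound lam Fk Fr Ir α ≤ accessOptimalReadBandwidth lam Fk Fr α := by
  rw [← sub_nonneg, accessOptimalReadBandwidth_sub_readBandwidthLowerBound Fk α hD.ne']
  have hc : 0 ≤ α * (lam - 1) := mul_nonneg hα (sub_nonneg.mpr hlam)
  have hgap : 0 ≤ (Ir - Fr) * (Fk - Fr) :=
    mul_nonneg (sub_nonneg.mpr hFrIr) (sub_nonneg.mpr hFrFk)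
  exact div_nonneg (mul_nonneg hc hgap) hD.le

theorem tight_bound_le_access_optimal_general {lam Fk Fr Ir α : K} (hlam : 1 < lam)
    (hFr : 0 < Fr) (hFrFk : Fr ≤ Fk) (hFrIr : Fr ≤ Ir) (hα : 0 < α) :
    readBandwidthLowerBound lam Fk Fr Ir α ≤ accessOptimalReadBandwidth lam Fk Fr α ∧
      (readBandwidthLowerBound lam Fk Fr Ir α = accessOptimalReadBandwidth lam Fk Fr α ↔
        Ir = Fr ∨ Fk = Fr) := by
  have hD : 0 < (lam - 1) * Fr + Ir :=
    add_pos (mul_pos (sub_pos.mpr hlam) hFr) (hFr.trans_le hFrIr)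
  exact ⟨readBandwidthLowerBound_le_accessOptimalReadBandwidth hlam.le hα.le hFrFk hFrIr hD,
    readBandwidthLowerBound_eq_accessOptimalReadBandwidth_iff hlam.ne' hα.ne' hD.ne'⟩

end ReadBandwidth

/-- If `Fr ≤ Fk` and `Ir ≥ Fr`, the lower bound of Theorem 2 is at most the read
conversion bandwidth of access-optimal convertible codes, with equality iff
`Ir = Fr` or `Fk = Fr`. -/
theorem tight_bound_le_access_optimal (lam Fk Fr Ir : ℕ) (hlam : 2 ≤ lam)
    (hFk : 0 < Fk) (hFr : 0 < Fr) (hIr : 0 < Ir)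
    (hFrFk : Fr ≤ Fk) (hIrFr : Fr ≤ Ir)
    (α : ℝ) (hα : 0 < α) :
    (lam : ℝ) * Fr * α * (((lam : ℝ) - 1) * Fk + Ir) / (((lam : ℝ) - 1) * Fr + Ir)
      ≤ (((lam : ℝ) - 1) * Fk + Fr) * α ∧
    ((lam : ℝ) * Fr * α * (((lam : ℝ) - 1) * Fk + Ir) / (((lam : ℝ) - 1) * Fr + Ir)
        = (((lam : ℝ) - 1) * Fk + Fr) * α ↔ Ir = Fr ∨ Fk = Fr) := by
  rw [← Nat.cast_inj (R := ℝ) (m := Ir), ← Nat.cast_inj (R := ℝ) (m := Fk)]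
  exact tight_bound_le_access_optimal_general (Nat.one_lt_cast.mpr hlam) (Nat.cast_pos.mpr hFr)
    (Nat.cast_le.mpr hFrFk) (Nat.cast_le.mpr hIrFr) hα
end

section
/- Suppose Fr < Fk and Fr ≤ Ir ≤ λ·Fr. Then the lower bound of Theorem 2 is at least the lower bound of Theorem 1: λ·Fr·α·((λ − 1)·Fk + Ir)/((λ − 1)·Fr + Ir) ≥ λ·Fk·α − Ir·α·(Fk/Fr − 1). -/
/-!
As functions of the parameters the two bounds agree when `Ir = 0`, when `Ir = Fr` and when
`Fk = Fr`. Over the common denominator these coincidences account, up to `α`, for the numerator of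
their difference, which is therefore a product of factors of known sign.
-/

section

variable {K : Type*} [Field K] {lam Fk Fr Ir α : K}

theorem tight_bound_sub_loose_bound (hFr : Fr ≠ 0) (hden : (lam - 1) * Fr + Ir ≠ 0) :
    lam * Fr * α * ((lam - 1) * Fk + Ir) / ((lam - 1) * Fr + Ir)
        - (lam * Fk * α - Ir * α * (Fk / Fr - 1))
      = α * Ir * (Fk - Fr) * (Ir - Fr) / (Fr * ((lam - 1) * Fr + Ir)) := by
  -- `field_simp` orders the product in the denominator this way and looks for it in that form.
  rw [mul_comm (lam - 1)] at hden
  field_simp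
  ring

theorem tight_bound_ge_loose_bound_general [LinearOrder K] [IsStrictOrderedRing K]
    (hlam : 0 < lam) (hFr : 0 < Fr) (hFrFk : Fr ≤ Fk) (hFrIr : Fr ≤ Ir) (hα : 0 ≤ α) :
    lam * Fr * α * ((lam - 1) * Fk + Ir) / ((lam - 1) * Fr + Ir)
      ≥ lam * Fk * α - Ir * α * (Fk / Fr - 1) := by
  have hIr : 0 ≤ Ir := hFr.le.trans hFrIr
  have hden : 0 < (lam - 1) * Fr + Ir :=
    calc 0 < lam * Fr + (Ir - Fr) :=
          add_pos_of_pos_of_nonneg (mul_pos hlam hFr) (sub_nonneg.2 hFrIr)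
      _ = (lam - 1) * Fr + Ir := by ring
  rw [ge_iff_le, ← sub_nonneg, tight_bound_sub_loose_bound hFr.ne' hden.ne']
  have hnum : 0 ≤ α * Ir * (Fk - Fr) * (Ir - Fr) :=
    mul_nonneg (mul_nonneg (mul_nonneg hα hIr) (sub_nonneg.2 hFrFk)) (sub_nonneg.2 hFrIr)
  exact div_nonneg hnum (mul_pos hFr hden).le

end

/-- If `Fr < Fk` and `Fr ≤ Ir ≤ λ·Fr`, the lower bound of Theorem 2 is at least
the lower bound of Theorem 1:
`λ·Fr·α·((λ − 1)·Fk + Ir)/((λ − 1)·Fr + Ir) ≥ λ·Fk·α − Ir·α·(Fk/Fr − 1)`. -/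
theorem tight_bound_ge_loose_bound (lam Fk Fr Ir : ℕ) (hlam : 2 ≤ lam)
    (hFk : 0 < Fk) (hFr : 0 < Fr) (hIr : 0 < Ir)
    (hFrFk : Fr < Fk) (hFrIr : Fr ≤ Ir) (hIrlam : Ir ≤ lam * Fr)
    (α : ℝ) (hα : 0 < α) :
    (lam : ℝ) * Fr * α * (((lam : ℝ) - 1) * Fk + Ir) / (((lam : ℝ) - 1) * Fr + Ir)
      ≥ (lam : ℝ) * Fk * α - (Ir : ℝ) * α * ((Fk : ℝ) / Fr - 1) :=
  tight_bound_ge_loose_bound_general (Nat.cast_pos.2 (two_pos.trans_le hlam)) (Nat.cast_pos.2 hFr)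
    (Nat.cast_le.2 hFrFk.le) (Nat.cast_le.2 hFrIr) hα.le
end
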